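/- Let F⁰ ∈ ℝ^{m×n} satisfy ρ(A + BF⁰) < 1, and suppose both of the following iterations are initialized at F⁰ and are well defined for all s ≥ 0: (classical policy iteration) X^s is the unique symmetric solution of X = γ(A + BF^s)'X(A + BF^s) + (F^s)'RF^s + Q and F^{s+1} := −γ(R + γB'X^sB)⁻¹B'X^sA; (primal-dual iteration) P^s is the unique symmetric solution of γ (A_{F_p^s})' P A_{F_p^s} + Λ = P with P^s_{22} positive definite, F_p⁰ = F⁰, and F_p^{s+1} := −(P^s_{22})⁻¹ (P^s_{12})'. Then for every s ≥ 0: F_p^s = F^s and X^s = (F̄_p^s)' P^s F̄_p^s, where F̄_p^s = [I_n; F_p^s]. -/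

import Mathlib

open Matrix MeasureTheory Filter
open scoped ENNReal

/-- Spectral radius of a real square matrix: the maximum modulus of its complex
eigenvalues, expressed via the spectral radius of its complexification. -/
noncomputable def specRad {ι : Type*} [Fintype ι] [DecidableEq ι]
    (M : Matrix ι ι ℝ) : ℝ≥0∞ :=
  spectralRadius ℂ (M.map Complex.ofReal)

/-- The block matrix `A_F = [[A, B], [FA, FB]]`. -/
noncomputable def blockAF {n m : ℕ} (A : Matrix (Fin n) (Fin n) ℝ)
    (B : Matrix (Fin n) (Fin m) ℝ) (F : Matrix (Fin m) (Fin n) ℝ) :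
    Matrix (Fin n ⊕ Fin m) (Fin n ⊕ Fin m) ℝ :=
  Matrix.fromBlocks A B (F * A) (F * B)

/-- The block column matrix `F̄ = [I_n; F]`. -/
noncomputable def extendF {n m : ℕ} (F : Matrix (Fin m) (Fin n) ℝ) :
    Matrix (Fin n ⊕ Fin m) (Fin n) ℝ :=
  Matrix.fromRows (1 : Matrix (Fin n) (Fin n) ℝ) F

/-- The block diagonal matrix `Λ = diag(Q, R)`. -/
noncomputable def blockLam {n m : ℕ} (Q : Matrix (Fin n) (Fin n) ℝ)
    (R : Matrix (Fin m) (Fin m) ℝ) :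
    Matrix (Fin n ⊕ Fin m) (Fin n ⊕ Fin m) ℝ :=
  Matrix.fromBlocks Q 0 0 R

/-- The LQR gain `F = -γ (R + γ B' X B)⁻¹ B' X A` associated with `X`. -/
noncomputable def gainF {n m : ℕ} (A : Matrix (Fin n) (Fin n) ℝ)
    (B : Matrix (Fin n) (Fin m) ℝ) (R : Matrix (Fin m) (Fin m) ℝ)
    (γ : ℝ) (X : Matrix (Fin n) (Fin n) ℝ) : Matrix (Fin m) (Fin n) ℝ :=
  -(γ • ((R + γ • (Bᵀ * X * B))⁻¹ * (Bᵀ * X * A)))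

/-- `P = [[Q + γA'XA, γA'XB], [γB'XA, R + γB'XB]]`. -/
noncomputable def Pmat {n m : ℕ} (A : Matrix (Fin n) (Fin n) ℝ)
    (B : Matrix (Fin n) (Fin m) ℝ) (Q : Matrix (Fin n) (Fin n) ℝ)
    (R : Matrix (Fin m) (Fin m) ℝ) (γ : ℝ) (X : Matrix (Fin n) (Fin n) ℝ) :
    Matrix (Fin n ⊕ Fin m) (Fin n ⊕ Fin m) ℝ :=
  Matrix.fromBlocks (Q + γ • (Aᵀ * X * A)) (γ • (Aᵀ * X * B))
    (γ • (Bᵀ * X * A)) (R + γ • (Bᵀ * X * B))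

/-- `X` solves the discounted algebraic Riccati equation
`X = Q + γA'XA − γ²A'XB(R + γB'XB)⁻¹B'XA`. -/
def IsAREsol {n m : ℕ} (A : Matrix (Fin n) (Fin n) ℝ)
    (B : Matrix (Fin n) (Fin m) ℝ) (Q : Matrix (Fin n) (Fin n) ℝ)
    (R : Matrix (Fin m) (Fin m) ℝ) (γ : ℝ) (X : Matrix (Fin n) (Fin n) ℝ) : Prop :=
  X = Q + γ • (Aᵀ * X * A)
    - (γ ^ 2) • (Aᵀ * X * B * (R + γ • (Bᵀ * X * B))⁻¹ * (Bᵀ * X * A))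

lemma aux_block {n m : ℕ} (A : Matrix (Fin n) (Fin n) ℝ)
    (B : Matrix (Fin n) (Fin m) ℝ) (F : Matrix (Fin m) (Fin n) ℝ) :
    blockAF A B F = extendF F * Matrix.fromCols A B := by
  unfold blockAF extendF
  rw [Matrix.fromRows_mul_fromCols]
  simp

lemma aux_P {n m : ℕ} (A : Matrix (Fin n) (Fin n) ℝ)
    (B : Matrix (Fin n) (Fin m) ℝ) (Q : Matrix (Fin n) (Fin n) ℝ)
    (R : Matrix (Fin m) (Fin m) ℝ) (γ : ℝ) (F : Matrix (Fin m) (Fin n) ℝ)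
    (P : Matrix (Fin n ⊕ Fin m) (Fin n ⊕ Fin m) ℝ)
    (h : γ • ((blockAF A B F)ᵀ * P * blockAF A B F) + blockLam Q R = P) :
    P = Pmat A B Q R γ ((extendF F)ᵀ * P * extendF F) := by
  have e : (blockAF A B F)ᵀ * P * blockAF A B F =
      Matrix.fromRows Aᵀ Bᵀ * ((extendF F)ᵀ * P * extendF F) * Matrix.fromCols A B := by
    rw [aux_block, Matrix.transpose_mul, Matrix.transpose_fromCols]
    simp only [Matrix.mul_assoc]
  rw [e] at h
  generalize (extendF F)ᵀ * P * extendF F = Y at h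
  rw [← h, Matrix.fromRows_mul, Matrix.fromRows_mul_fromCols, blockLam, Pmat,
    Matrix.fromBlocks_smul, Matrix.fromBlocks_add]
  simp [add_comm]

lemma aux_Y {n m : ℕ} (A : Matrix (Fin n) (Fin n) ℝ)
    (B : Matrix (Fin n) (Fin m) ℝ) (Q : Matrix (Fin n) (Fin n) ℝ)
    (R : Matrix (Fin m) (Fin m) ℝ) (γ : ℝ) (F : Matrix (Fin m) (Fin n) ℝ)
    (Y : Matrix (Fin n) (Fin n) ℝ) :
    (extendF F)ᵀ * Pmat A B Q R γ Y * extendF F =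
      γ • ((A + B * F)ᵀ * Y * (A + B * F)) + Fᵀ * R * F + Q := by
  unfold extendF Pmat
  rw [Matrix.transpose_fromRows, Matrix.fromCols_mul_fromBlocks, Matrix.fromCols_mul_fromRows]
  simp only [Matrix.transpose_one, Matrix.one_mul, Matrix.mul_one, Matrix.mul_add, Matrix.add_mul,
    Matrix.transpose_add, Matrix.transpose_mul, Matrix.mul_smul, Matrix.smul_mul, smul_add,
    Matrix.mul_assoc]
  abel

theorem pi_equals_primal_dual (n m : ℕ) (hn : 0 < n) (hm : 0 < m)
    (A : Matrix (Fin n) (Fin n) ℝ) (B : Matrix (Fin n) (Fin m) ℝ)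
    (Q : Matrix (Fin n) (Fin n) ℝ) (R : Matrix (Fin m) (Fin m) ℝ)
    (hQ : Q.PosSemidef) (hR : R.PosDef)
    (γ : ℝ) (hγ0 : 0 < γ) (hγ1 : γ < 1)
    (F0 : Matrix (Fin m) (Fin n) ℝ) (hF0 : specRad (A + B * F0) < 1)
    -- classical policy iteration
    (Fseq : ℕ → Matrix (Fin m) (Fin n) ℝ)
    (Xseq : ℕ → Matrix (Fin n) (Fin n) ℝ)
    (hFinit : Fseq 0 = F0)
    (hXdef : ∀ s : ℕ, (Xseq s).IsSymm
      ∧ Xseq s = γ • ((A + B * Fseq s)ᵀ * Xseq s * (A + B * Fseq s))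
          + (Fseq s)ᵀ * R * Fseq s + Q
      ∧ ∀ Y : Matrix (Fin n) (Fin n) ℝ, Y.IsSymm →
          Y = γ • ((A + B * Fseq s)ᵀ * Y * (A + B * Fseq s))
              + (Fseq s)ᵀ * R * Fseq s + Q → Y = Xseq s)
    (hFstep : ∀ s : ℕ, Fseq (s + 1) = gainF A B R γ (Xseq s))
    -- primal-dual iteration
    (Fpseq : ℕ → Matrix (Fin m) (Fin n) ℝ)
    (Pseq : ℕ → Matrix (Fin n ⊕ Fin m) (Fin n ⊕ Fin m) ℝ)
    (hFpinit : Fpseq 0 = F0)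
    (hPdef : ∀ s : ℕ, (Pseq s).IsSymm
      ∧ γ • ((blockAF A B (Fpseq s))ᵀ * Pseq s * blockAF A B (Fpseq s))
          + blockLam Q R = Pseq s
      ∧ ((Pseq s).toBlocks₂₂).PosDef
      ∧ ∀ P' : Matrix (Fin n ⊕ Fin m) (Fin n ⊕ Fin m) ℝ, P'.IsSymm →
          γ • ((blockAF A B (Fpseq s))ᵀ * P' * blockAF A B (Fpseq s))
              + blockLam Q R = P' → P' = Pseq s)
    (hFpstep : ∀ s : ℕ,
      Fpseq (s + 1) = -(((Pseq s).toBlocks₂₂)⁻¹ * ((Pseq s).toBlocks₁₂)ᵀ)) :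
    ∀ s : ℕ, Fpseq s = Fseq s
      ∧ Xseq s = (extendF (Fpseq s))ᵀ * Pseq s * extendF (Fpseq s) := by
  have step : ∀ s, Fpseq s = Fseq s →
      Xseq s = (extendF (Fpseq s))ᵀ * Pseq s * extendF (Fpseq s) := by
    intro s hs
    obtain ⟨hPs, hPe, -, -⟩ := hPdef s
    obtain ⟨-, -, hu⟩ := hXdef s
    have hP := aux_P A B Q R γ (Fpseq s) (Pseq s) hPe
    symm
    apply hu
    · unfold Matrix.IsSymm
      rw [Matrix.transpose_mul, Matrix.transpose_mul, Matrix.transpose_transpose, hPs.eq,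
        Matrix.mul_assoc]
    · rw [← hs, ← aux_Y, ← hP]
  intro s
  suffices h : Fpseq s = Fseq s from ⟨h, step s h⟩
  induction s with
  | zero => rw [hFpinit, hFinit]
  | succ s ih =>
    have hX := step s ih
    have hP := aux_P A B Q R γ (Fpseq s) (Pseq s) (hPdef s).2.1
    rw [← hX] at hP
    rw [hFpstep, hFstep, hP, Pmat, Matrix.toBlocks_fromBlocks₂₂, Matrix.toBlocks_fromBlocks₁₂,
      gainF]
    simp [Matrix.transpose_mul, (hXdef s).1.eq, Matrix.mul_assoc]
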